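/- Let α ∈ (0,1) be irrational with continued fraction expansion α = [a_1, a_2, …] and suppose there exists C ∈ ℝ with a_n ≤ C for all n ∈ ℕ. Then for every nonnegative subadditive function F : W_α → ℝ, the limit lim_{|w|→∞, w ∈ W_α} F(w)/|w| exists; that is, there is L ∈ ℝ such that for every ε > 0 there exists N ∈ ℕ with |F(w)/|w| − L| ≤ ε for all w ∈ W_α with |w| ≥ N. -/

import Mathlib

open scoped Classical

noncomputable section

/-- The Sturmian potential `v_{α,θ}(n) = χ_{[1-α,1)}(nα + θ mod 1)`. -/
def sturmian (α θ : ℝ) (n : ℤ) : ℝ :=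
  if Int.fract (n * α + θ) ∈ Set.Ico (1 - α) 1 then 1 else 0

/-- Iterates of the Gauss map, starting at `α`. -/
def cfGauss (α : ℝ) : ℕ → ℝ
  | 0 => α
  | n + 1 => Int.fract (cfGauss α n)⁻¹

/-- The continued fraction coefficients `a_n` of `α = [a_1, a_2, …]` (for `n ≥ 1`):
`a_1 = ⌊1/α⌋`, `a_2 = ⌊1/fract(1/α)⌋`, … . -/
def cfCoeff (α : ℝ) (n : ℕ) : ℕ := ⌊(cfGauss α (n - 1))⁻¹⌋₊

/-- The standard words, with an index shift: `sWord a n` is `s_{n-1}`.  Thus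
`sWord a 0 = s_{-1} = 1`, `sWord a 1 = s_0 = 0`, `sWord a 2 = s_1 = 0^{a_1 - 1} 1`, and
`sWord a (n+1) = s_n = s_{n-1}^{a_n} s_{n-2}` for `n ≥ 2`. -/
def sWord (a : ℕ → ℕ) : ℕ → List ℝ
  | 0 => [1]
  | 1 => [0]
  | 2 => List.replicate (a 1 - 1) (0 : ℝ) ++ [1]
  | n + 3 => (List.replicate (a (n + 2)) (sWord a (n + 2))).flatten ++ sWord a (n + 1)

/-- The `n`-th letter (for `n ≥ 1`) of the one-sided infinite word `c_α = lim s_n`: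
since `|s_n| ≥ n`, it is the `n`-th letter of `s_n`. -/
def cword (α : ℝ) (n : ℕ) : ℝ := (sWord (cfCoeff α) (n + 1)).getD (n - 1) 0

/-- `w` is a (finite) prefix of the one-sided infinite word `c_α`. -/
def IsPrefC (α : ℝ) (w : List ℝ) : Prop :=
  w = (List.range w.length).map fun i => cword α (i + 1)

/-- The one-step transfer matrix `T(λ,E,a) = [[E - λa, -1], [1, 0]]`. -/
def transferT (lam : ℝ) (E : ℂ) (a : ℝ) : Matrix (Fin 2) (Fin 2) ℂ :=
  !![E - lam * a, -1; 1, 0]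

/-- The transfer matrix over a word `w = w_1 … w_n`:
`M(λ,E,w) = T(λ,E,w_n) ⋯ T(λ,E,w_1)`. -/
def transferM (lam : ℝ) (E : ℂ) : List ℝ → Matrix (Fin 2) (Fin 2) ℂ
  | [] => 1
  | a :: w => transferM lam E w * transferT lam E a

/-- The operator norm on `ℂ²` (with the euclidean norm) of a `2 × 2` complex matrix. -/
def opNorm (A : Matrix (Fin 2) (Fin 2) ℂ) : ℝ :=
  ‖Matrix.toEuclideanCLM (𝕜 := ℂ) A‖

/-- The word `v_{α,θ}^n = v_{α,θ}(1) … v_{α,θ}(n)`. -/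
def sturmianWord (α θ : ℝ) (n : ℕ) : List ℝ :=
  (List.range n).map fun k => sturmian α θ (k + 1)

/-- The set of finite nonempty subwords of a two-sided sequence `v : ℤ → ℝ`. -/
def SubZ (v : ℤ → ℝ) : Set (List ℝ) :=
  {w | w ≠ [] ∧ ∃ k : ℤ, w = (List.range w.length).map fun i => v (k + i)}

/-- The set of finite nonempty subwords of the one-sided word `c_α` (indexed from `1`). -/
def SubC (α : ℝ) : Set (List ℝ) :=
  {w | w ≠ [] ∧ ∃ k : ℕ, 1 ≤ k ∧ w = (List.range w.length).map fun i => cword α (k + i)}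

/-- `W_α`, the set of all finite nonempty subwords of the sequences `v_{α,θ}`, `θ ∈ [0,1)`. -/
def Walpha (α : ℝ) : Set (List ℝ) :=
  {w | ∃ θ ∈ Set.Ico (0 : ℝ) 1, w ∈ SubZ (sturmian α θ)}

/-- `α` is a bounded density number: `limsup_{n→∞} (1/n) ∑_{j=1}^n a_j < ∞` for the
continued fraction coefficients `a_j` of `α`. -/
def BoundedDensity (α : ℝ) : Prop :=
  Filter.IsBoundedUnder (· ≤ ·) Filter.atTop
    (fun n : ℕ => (1 / n : ℝ) * ∑ j ∈ Finset.Icc 1 n, (cfCoeff α j : ℝ))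

end

/-! Subadditivity gives, via Fekete's lemma, the limit `L` of `M n / n`, where `M n` is the maximum
of `F` over the words of length `n`, so that `F w ≤ (L + δ) |w| + B`. For the matching lower bound,
take a word `u` of length `K |w|` with `F u = M (K |w|) ≥ L K |w|`. If `u = a w b`, then
`F w ≥ F u - F a - F b`, and the upper bound for `F a` and `F b` yields
`F w ≥ (L - K δ) |w| - 2 B`. So all that is needed is that every word of length `K n` contains every
word of length `n`.

For Sturmian words this amounts to an interval of length `c / n` being visited by each orbit of the
rotation by `α` within a time proportional to `n`, which holds as `α` is badly approximable. Bad
approximability follows from bounded coefficients by a descent: the Gauss map acts on the indefinite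
forms `|m α - k| (m + y k) / (1 + α y)` and preserves their values. -/

section SubadditiveSequence

variable {u : ℕ → ℝ} (hu : Subadditive u) (hbdd : BddBelow (Set.range fun n => u n / n))

include hbdd in
lemma lim_mul_le (n : ℕ) : hu.lim * n ≤ u n := by
  rcases eq_or_ne n 0 with rfl | hn
  · simpa using hu 0 0
  · exact (le_div_iff₀ (by positivity)).mp (hu.lim_le_div hbdd hn)

include hbdd in
lemma exists_le_lim_add_mul_add {δ : ℝ} (hδ : 0 < δ) :
    ∃ B, ∀ n, u n ≤ (hu.lim + δ) * n + B := by
  have hlt : ∀ᶠ n : ℕ in Filter.atTop, u n - (hu.lim + δ) * n ≤ 0 := by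
    filter_upwards [(hu.tendsto_lim hbdd).eventually_lt_const (lt_add_of_pos_right _ hδ),
      Filter.eventually_gt_atTop 0] with n hn hn0
    exact sub_nonpos.mpr ((div_lt_iff₀ (by positivity)).mp hn).le
  obtain ⟨B, hB⟩ := (Filter.isBoundedUnder_of_eventually_le hlt).bddAbove_range
  exact ⟨B, fun n => sub_le_iff_le_add'.mp (hB (Set.mem_range_self n))⟩

end SubadditiveSequence

section Language

variable {A : Type*}

/-- The set of words `W` contains every nonempty factor of each of its members. -/
def FactorClosed (W : Set (List A)) : Prop :=
  ∀ ⦃u⦄, u ∈ W → ∀ ⦃v⦄, v ≠ [] → v <:+: u → v ∈ W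

/-- `W` is linearly repetitive with constant `K`: each word of `W` occurs in all words of `W` that
are at least `K` times as long. -/
def LinearlyRepetitive (W : Set (List A)) (K : ℕ) : Prop :=
  ∀ ⦃w⦄, w ∈ W → ∀ ⦃u⦄, u ∈ W → K * w.length ≤ u.length → w <:+: u

/-- `F` is subadditive on the set of words `W`, with respect to concatenation within `W`. -/
def SubadditiveOn (F : List A → ℝ) (W : Set (List A)) : Prop :=
  ∀ a b, a ∈ W → b ∈ W → a ++ b ∈ W → F (a ++ b) ≤ F a + F b

/-- The words of length `n` in `W`. -/
def wordsOfLength (W : Set (List A)) (n : ℕ) : Set (List A) := {w ∈ W | w.length = n}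

/-- The supremum of `F` over the words of length `n` in `W`; it is `0` if there are none. -/
noncomputable def lengthSup (F : List A → ℝ) (W : Set (List A)) (n : ℕ) : ℝ :=
  sSup (F '' wordsOfLength W n)

variable {W : Set (List A)} {F : List A → ℝ} {K n : ℕ}

lemma FactorClosed.nonempty_wordsOfLength (hW : FactorClosed W)
    (hlong : ∀ n, ∃ w ∈ W, n ≤ w.length) (hn : n ≠ 0) : (wordsOfLength W n).Nonempty := by
  obtain ⟨w, hw, hnw⟩ := hlong n
  have hlen : (w.take n).length = n := List.length_take_of_le hnw
  exact ⟨w.take n, hW hw (List.ne_nil_of_length_pos (by lia)) (w.take_prefix n).isInfix, hlen⟩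

lemma LinearlyRepetitive.finite_wordsOfLength (hrep : LinearlyRepetitive W K)
    (hlong : ∀ n, ∃ w ∈ W, n ≤ w.length) (n : ℕ) : (wordsOfLength W n).Finite := by
  obtain ⟨u, hu, hnu⟩ := hlong (K * n)
  refine u.sublists.finite_toSet.subset fun w ⟨hw, hwn⟩ => ?_
  exact List.mem_sublists.mpr (hrep hw hu (hwn ▸ hnu)).sublist

lemma le_lengthSup (F : List A → ℝ) {w : List A}
    (hfin : (wordsOfLength W w.length).Finite) (hw : w ∈ W) : F w ≤ lengthSup F W w.length :=
  le_csSup (hfin.image F).bddAbove (Set.mem_image_of_mem F ⟨hw, rfl⟩)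

lemma exists_eq_lengthSup (hfin : (wordsOfLength W n).Finite)
    (hne : (wordsOfLength W n).Nonempty) : ∃ w ∈ wordsOfLength W n, F w = lengthSup F W n :=
  (hne.image F).csSup_mem (hfin.image F)

lemma SubadditiveOn.lengthSup_zero_nonneg (hF : SubadditiveOn F W) : 0 ≤ lengthSup F W 0 := by
  refine Real.sSup_nonneg ?_
  rintro _ ⟨w, ⟨hw, hlen⟩, rfl⟩
  obtain rfl := List.length_eq_zero_iff.mp hlen
  simpa using hF [] [] hw hw hw

lemma bddBelow_lengthSup_div (hfin : ∀ n, (wordsOfLength W n).Finite) {c : ℝ}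
    (hc : ∀ w ∈ W, c * w.length ≤ F w) : BddBelow (Set.range fun n => lengthSup F W n / n) := by
  refine ⟨min c 0, ?_⟩
  rintro _ ⟨n, rfl⟩
  rcases eq_or_ne n 0 with rfl | hn
  · simp
  rcases (wordsOfLength W n).eq_empty_or_nonempty with hempty | ⟨w, hw, rfl⟩
  · simp [lengthSup, hempty]
  have hlen : (0 : ℝ) < w.length := by positivity
  exact (min_le_left c 0).trans
    ((le_div_iff₀ hlen).mpr ((hc w hw).trans (le_lengthSup F (hfin _) hw)))

section

variable (hF : SubadditiveOn F W) (hW : FactorClosed W) (hfin : ∀ n, (wordsOfLength W n).Finite)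

include hF hW hfin

lemma SubadditiveOn.apply_append_le_lengthSup_add {a w : List A} (hw : w ≠ [])
    (haw : a ++ w ∈ W) : F (a ++ w) ≤ lengthSup F W a.length + F w := by
  rcases eq_or_ne a [] with rfl | ha
  · simpa using hF.lengthSup_zero_nonneg
  · have haW : a ∈ W := hW haw ha (List.prefix_append a w).isInfix
    have hwW : w ∈ W := hW haw hw (List.suffix_append a w).isInfix
    grw [hF a w haW hwW haw, le_lengthSup F (hfin _) haW]

lemma SubadditiveOn.apply_append_le_add_lengthSup {w b : List A} (hw : w ≠ [])
    (hwb : w ++ b ∈ W) : F (w ++ b) ≤ F w + lengthSup F W b.length := by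
  rcases eq_or_ne b [] with rfl | hb
  · simpa using hF.lengthSup_zero_nonneg
  · have hwW : w ∈ W := hW hwb hw (List.prefix_append w b).isInfix
    have hbW : b ∈ W := hW hwb hb (List.suffix_append w b).isInfix
    grw [hF w b hwW hbW hwb, le_lengthSup F (hfin _) hbW]

variable (hlong : ∀ n, ∃ w ∈ W, n ≤ w.length)

include hlong

lemma SubadditiveOn.subadditive_lengthSup : Subadditive (lengthSup F W) := by
  intro m n
  rcases eq_or_ne m 0 with rfl | hm
  · simpa using hF.lengthSup_zero_nonneg
  obtain ⟨w, ⟨hw, hlen⟩, hmax⟩ := exists_eq_lengthSup (F := F) (hfin (m + n))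
    (hW.nonempty_wordsOfLength hlong (by lia))
  have htake : (w.take m).length = m := List.length_take_of_le (by lia)
  have hdrop : (w.drop m).length = n := by rw [List.length_drop]; lia
  have hne : w.take m ≠ [] := List.ne_nil_of_length_pos (by lia)
  have hsplit := hF.apply_append_le_add_lengthSup hW hfin hne
    (b := w.drop m) (by rwa [List.take_append_drop])
  have hle := le_lengthSup F (hfin _) (hW hw hne (w.take_prefix m).isInfix)
  rw [List.take_append_drop, hdrop] at hsplit
  rw [htake] at hle
  linarith

lemma LinearlyRepetitive.sub_le_apply (hrep : LinearlyRepetitive W K) {L η B : ℝ}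
    (hlower : ∀ n, L * n ≤ lengthSup F W n)
    (hupper : ∀ n, lengthSup F W n ≤ (L + η) * n + B) {w : List A} (hw : w ∈ W) (hne : w ≠ []) :
    L * w.length - (η * (K * w.length) + 2 * B) ≤ F w := by
  have hpos : w.length ≠ 0 := List.length_eq_zero_iff.not.mpr hne
  obtain ⟨u, ⟨hu, hlen⟩, hmax⟩ := exists_eq_lengthSup (F := F) (hfin ((K + 1) * w.length))
    (hW.nonempty_wordsOfLength hlong (by positivity))
  obtain ⟨a, b, rfl⟩ := hrep hw hu (by rw [hlen]; gcongr; lia)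
  have hawW : a ++ w ∈ W := hW hu (by simp [hne]) (List.prefix_append _ b).isInfix
  have hsplit : F (a ++ w ++ b) ≤ lengthSup F W a.length + F w + lengthSup F W b.length := by
    grw [hF.apply_append_le_add_lengthSup hW hfin (by simp [hne]) hu,
      hF.apply_append_le_lengthSup_add hW hfin hne hawW]
  have hab : (a.length + b.length : ℝ) = K * w.length := by
    simp only [List.length_append] at hlen
    norm_cast
    lia
  have hlast := hlower ((K + 1) * w.length)
  push_cast at hlast
  rw [← hab]
  linear_combination hlast + hmax.ge + hsplit + hupper a.length + hupper b.length + L * hab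

omit hfin in
lemma LinearlyRepetitive.exists_abs_sub_mul_length_le (hrep : LinearlyRepetitive W K) {c : ℝ}
    (hc : ∀ w ∈ W, c * w.length ≤ F w) :
    ∃ L, ∀ δ > 0, ∃ B, ∀ w ∈ W, w ≠ [] → |F w - L * w.length| ≤ δ * w.length + B := by
  have hfin := hrep.finite_wordsOfLength hlong
  have hM : Subadditive (lengthSup F W) := hF.subadditive_lengthSup hW hfin hlong
  have hbdd := bddBelow_lengthSup_div hfin hc
  refine ⟨hM.lim, fun δ hδ => ?_⟩
  obtain ⟨B, hupper⟩ := exists_le_lim_add_mul_add hM hbdd (δ := δ / (K + 1)) (by positivity)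
  have hB : 0 ≤ B := by simpa using hF.lengthSup_zero_nonneg.trans (hupper 0)
  refine ⟨2 * B, fun w hw hne => abs_sub_le_iff.mpr ⟨?_, ?_⟩⟩
  · have hηδ : δ / (K + 1) * w.length ≤ δ * w.length := by
      gcongr
      exact div_le_self hδ.le (by simp)
    linarith [le_lengthSup F (hfin _) hw, hupper w.length]
  · have hηδ : δ / (K + 1) * (K * w.length) ≤ δ * w.length := by
      rw [← mul_assoc]
      gcongr
      rw [div_mul_eq_mul_div, div_le_iff₀ (by positivity)]
      gcongr
      simp
    linarith [hrep.sub_le_apply hF hW hfin hlong (lim_mul_le hM hbdd) hupper hw hne]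

end

theorem LinearlyRepetitive.exists_limit (hrep : LinearlyRepetitive W K) (hW : FactorClosed W)
    (hF : SubadditiveOn F W) {c : ℝ} (hc : ∀ w ∈ W, c * w.length ≤ F w) :
    ∃ L : ℝ, ∀ ε > (0 : ℝ), ∃ N : ℕ, ∀ w ∈ W, N ≤ w.length → |F w / w.length - L| ≤ ε := by
  by_cases hlong : ∀ n, ∃ w ∈ W, n ≤ w.length
  · obtain ⟨L, hL⟩ := hrep.exists_abs_sub_mul_length_le hF hW hlong hc
    refine ⟨L, fun ε hε => ?_⟩
    obtain ⟨B, hB⟩ := hL (ε / 2) (by positivity)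
    obtain ⟨N, hN⟩ := exists_nat_ge (2 * B / ε)
    refine ⟨N + 1, fun w hw hlen => ?_⟩
    have hpos : (0 : ℝ) < w.length := by norm_cast; lia
    have hBw : B ≤ ε / 2 * w.length := by
      have : (N : ℝ) ≤ w.length := by norm_cast; lia
      linarith [(div_le_iff₀ hε).mp (hN.trans this)]
    rw [div_sub' hpos.ne', abs_div, abs_of_pos hpos, div_le_iff₀ hpos, mul_comm (w.length : ℝ) L]
    linarith [hB w hw (List.ne_nil_of_length_pos (by lia))]
  · push Not at hlong
    obtain ⟨N, hN⟩ := hlong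
    exact ⟨0, fun _ _ => ⟨N, fun w hw hlen => absurd hlen (hN w hw).not_ge⟩⟩

end Language

section ContinuedFraction

/-- The indefinite binary quadratic form `(m α - k) (m + y k)`, in absolute value and normalized to
discriminant one. -/
noncomputable def indefForm (α y m k : ℝ) : ℝ := |m * α - k| * (m + y * k) / (1 + α * y)

variable {α y : ℝ}

lemma indefForm_gauss {a : ℝ} (hα : 0 < α) (ha : 0 < a) (hy : 0 ≤ y) (m k : ℝ) :
    indefForm α y (m + a * k) k = indefForm (α⁻¹ - a) (a + y)⁻¹ k m := by
  have hlin : (m + a * k) * α - k = -(α * (k * (α⁻¹ - a) - m)) := by field_simp; ring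
  have hden : 1 + (α⁻¹ - a) * (a + y)⁻¹ = (1 + α * y) / (α * (a + y)) := by field_simp; ring
  rw [indefForm, indefForm, hlin, hden, abs_neg, abs_mul, abs_of_pos hα]
  field_simp
  ring

lemma div_one_add_le_indefForm_zero (hα : 0 < α) (hy : y ∈ Set.Icc 0 1) {m : ℝ} (hm : 1 ≤ m) :
    α / (1 + α) ≤ indefForm α y m 0 := by
  obtain ⟨hy0, hy1⟩ := hy
  rw [indefForm, sub_zero, mul_zero, add_zero, abs_of_pos (by positivity)]
  gcongr ?_ / (1 + ?_)
  · exact (le_mul_of_one_le_left hα.le hm).trans (le_mul_of_one_le_right (by positivity) hm)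
  · exact mul_le_of_le_one_right hα.le hy1

lemma le_indefForm_of_add_one_le {a m k : ℝ} (hα : α ∈ Set.Ioo 0 1) (hy : 0 ≤ y)
    (ha : a * α ≤ 1) (hm : 1 ≤ m) (hk : 1 ≤ k) (hmk : m + 1 ≤ a * k) :
    α ≤ indefForm α y m k := by
  obtain ⟨hα0, hα1⟩ := hα
  have hdist : α ≤ |m * α - k| := by
    rw [abs_sub_comm]
    refine le_trans ?_ (le_abs_self _)
    nlinarith
  have hlin : 1 + α * y ≤ m + y * k := by nlinarith
  rw [indefForm, le_div_iff₀ (by positivity)]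
  gcongr

lemma cfGauss_fract_inv (α : ℝ) (n : ℕ) : cfGauss (Int.fract α⁻¹) n = cfGauss α (n + 1) := by
  induction n with
  | zero => rfl
  | succ n ih => rw [cfGauss, ih, ← cfGauss]

lemma cfCoeff_fract_inv (α : ℝ) {n : ℕ} (hn : 1 ≤ n) :
    cfCoeff (Int.fract α⁻¹) n = cfCoeff α (n + 1) := by
  rw [cfCoeff, cfCoeff, cfGauss_fract_inv]
  congr; lia

lemma fract_inv_eq_inv_sub_cfCoeff_one (hα : 0 ≤ α) :
    Int.fract α⁻¹ = α⁻¹ - cfCoeff α 1 := by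
  rw [cfCoeff, Nat.sub_self, cfGauss, natCast_floor_eq_intCast_floor (inv_nonneg.mpr hα),
    Int.self_sub_floor]

lemma inv_add_two_le_indefForm {α y C : ℝ} (hirr : Irrational α) (hα : α ∈ Set.Ioo 0 1)
    (hC : ∀ n : ℕ, 1 ≤ n → (cfCoeff α n : ℝ) ≤ C) (hy : y ∈ Set.Icc 0 1) {m : ℕ} (hm : 1 ≤ m)
    (k : ℕ) : (C + 2)⁻¹ ≤ indefForm α y m k := by
  have hα0 : 0 < α := hα.1
  set a := cfCoeff α 1
  have ha : 1 ≤ a := Nat.le_floor (by simpa [cfGauss] using (one_le_inv₀ hα0).mpr hα.2.le)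
  have haR : (1 : ℝ) ≤ a := mod_cast ha
  have hβ : Int.fract α⁻¹ = α⁻¹ - a := fract_inv_eq_inv_sub_cfCoeff_one hα0.le
  have hβirr : Irrational (Int.fract α⁻¹) := (irrational_inv_iff.mpr hirr).sub_intCast _
  have hβ0 : 0 < Int.fract α⁻¹ := (Int.fract_nonneg _).lt_of_ne hβirr.ne_zero.symm
  have hβ1 : Int.fract α⁻¹ < 1 := Int.fract_lt_one _
  have hαC : α⁻¹ ≤ C + 1 := by linarith [hC 1 le_rfl]
  rcases Nat.eq_zero_or_pos k with rfl | hk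
  · calc (C + 2)⁻¹ ≤ (α⁻¹ + 1)⁻¹ := inv_anti₀ (by positivity) (by linarith)
      _ = α / (1 + α) := by field_simp
      _ ≤ indefForm α y m (0 : ℕ) := by
        simpa using div_one_add_le_indefForm_zero hα0 hy (m := m) (mod_cast hm)
  rcases lt_or_ge m (a * k) with hmk | hmk
  · calc (C + 2)⁻¹ ≤ α⁻¹⁻¹ := inv_anti₀ (by positivity) (by linarith)
      _ = α := inv_inv α
      _ ≤ indefForm α y m k := le_indefForm_of_add_one_le (a := a) hα hy.1
        ((le_inv_mul_iff₀' hα0).mp (by linarith)) (mod_cast hm) (mod_cast hk) (mod_cast hmk)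
  · obtain ⟨m', rfl⟩ := Nat.exists_eq_add_of_le' hmk
    push_cast
    rw [indefForm_gauss hα0 (by positivity) hy.1, ← hβ]
    refine inv_add_two_le_indefForm hβirr ⟨hβ0, hβ1⟩ (fun n hn => ?_) ⟨?_, ?_⟩ hk m'
    · rw [cfCoeff_fract_inv α hn]
      exact hC _ (by lia)
    · have := hy.1
      positivity
    · exact inv_le_one_of_one_le₀ (by linarith [hy.1])
termination_by m + k
decreasing_by nlinarith

/-- `α` is badly approximable with constant `c`: its integer multiples `m α` keep distance at least
`c / m` from the integers. -/
def BadlyApproximableWith (c α : ℝ) : Prop :=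
  ∀ m : ℕ, 1 ≤ m → ∀ k : ℤ, c / m ≤ |m * α - k|

lemma badlyApproximableWith_of_cfCoeff_le {C : ℝ} (hirr : Irrational α) (hα : α ∈ Set.Ioo 0 1)
    (hC : ∀ n : ℕ, 1 ≤ n → (cfCoeff α n : ℝ) ≤ C) : BadlyApproximableWith (C + 2)⁻¹ α := by
  intro m hm k
  have hmR : (1 : ℝ) ≤ m := mod_cast hm
  rw [div_le_iff₀ (by positivity)]
  rcases lt_or_ge k 0 with hk | hk
  · have hC0 : 0 ≤ C := (Nat.cast_nonneg _).trans (hC 1 le_rfl)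
    have hkR : (k : ℝ) ≤ -1 := mod_cast Int.le_sub_one_of_lt hk
    have hdist : 1 ≤ |m * α - k| := by
      refine le_trans ?_ (le_abs_self _)
      nlinarith [hα.1]
    calc (C + 2)⁻¹ ≤ 1 := inv_le_one_of_one_le₀ (by linarith)
      _ ≤ |m * α - k| * m := one_le_mul_of_one_le_of_one_le hdist hmR
  · lift k to ℕ using hk
    simpa [indefForm] using
      inv_add_two_le_indefForm hirr hα hC (y := 0) (by simp) hm k

end ContinuedFraction

section Rotation

variable {α c : ℝ}

lemma exists_lt_den_mul_sub_mem_Ico (r : ℚ) (x : ℝ) :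
    ∃ i < r.den, ∃ t : ℤ, (i * r - t : ℝ) ∈ Set.Ico x (x + 1 / r.den) := by
  have hden : (0 : ℝ) < r.den := mod_cast r.pos
  set T := ⌈r.den * x⌉
  -- `i` solves `i * r.num ≡ T` modulo `r.den`, so that `i * r` is `T / r.den` modulo one.
  obtain ⟨u, v, huv⟩ : IsCoprime r.num (r.den : ℤ) :=
    Int.isCoprime_iff_nat_coprime.mpr (by simpa using r.reduced)
  obtain ⟨i, hi : T * u % r.den = i⟩ := Int.eq_ofNat_of_zero_le
    (Int.emod_nonneg (T * u) (Int.natCast_ne_zero.mpr r.den_nz))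
  have hlt : (i : ℤ) < r.den := hi ▸ Int.emod_lt_of_pos _ (mod_cast r.pos)
  obtain ⟨t, ht⟩ : (r.den : ℤ) ∣ i * r.num - T := by
    refine ⟨-(T * v) - T * u / r.den * r.num, ?_⟩
    rw [← hi, Int.emod_def]
    linear_combination T * huv
  refine ⟨i, mod_cast hlt, t, ?_⟩
  have hpt : (i * r - t : ℝ) = T / r.den := by
    have htR : (i * r.num - T : ℝ) = r.den * t := mod_cast ht
    rw [Rat.cast_def]
    field_simp
    linarith
  rw [hpt, Set.mem_Ico, le_div_iff₀ hden, div_lt_iff₀ hden, add_mul, one_div_mul_cancel hden.ne']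
  constructor <;> linarith [Int.le_ceil (r.den * x), Int.ceil_lt_add_one (r.den * x)]

lemma BadlyApproximableWith.exists_mul_add_sub_mem_Ico (h : BadlyApproximableWith c α)
    (hc : 0 < c) {Q : ℕ} (hQ : 0 < Q) (x y : ℝ) :
    ∃ i < Q, ∃ t : ℤ, i * α + y - t ∈ Set.Ico x (x + (c⁻¹ + 2) / Q) := by
  -- An orbit of length `r.den` of the rotation by `α` is `1 / Q`-close to that of the rotation by
  -- `r`, and the denominator of `r` is at least `c * Q`.
  obtain ⟨r, hr, hrQ⟩ := Real.exists_rat_abs_sub_le_and_den_le α hQ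
  have hden : (0 : ℝ) < r.den := mod_cast r.pos
  have hclose : r.den * |α - r| ≤ 1 / Q := by
    calc r.den * |α - r| ≤ r.den * (1 / ((Q + 1) * r.den)) := by gcongr
      _ = 1 / (Q + 1) := by field_simp
      _ ≤ 1 / Q := by gcongr; linarith
  have hgap : 1 / r.den ≤ c⁻¹ / Q := by
    have hfar : c / r.den ≤ r.den * |α - r| := by
      refine (h r.den r.pos r.num).trans_eq ?_
      rw [← abs_of_pos hden, ← abs_mul, abs_of_pos hden, mul_sub, Rat.cast_def,
        mul_div_cancel₀ _ hden.ne']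
    calc 1 / (r.den : ℝ) = c⁻¹ * (c / r.den) := by field_simp
      _ ≤ c⁻¹ * (1 / Q) := by grw [hfar, hclose]
      _ = c⁻¹ / Q := by ring
  obtain ⟨i, hi, t, hlo, hhi⟩ := exists_lt_den_mul_sub_mem_Ico r (x - y + 1 / Q)
  refine ⟨i, hi.trans_le hrQ, t, ?_⟩
  have hdrift : |i * (α - r)| ≤ 1 / Q := by
    rw [abs_mul, Nat.abs_cast]
    grw [← hclose, hi]
  obtain ⟨hdrift_lo, hdrift_hi⟩ := abs_le.mp hdrift
  have hsplit : (c⁻¹ + 2) / Q = c⁻¹ / Q + 1 / Q + 1 / Q := by ring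
  rw [Set.mem_Ico, hsplit]
  constructor <;> linarith

lemma BadlyApproximableWith.div_le_abs_sub (h : BadlyApproximableWith c α) (hc : 0 ≤ c)
    {n i j : ℕ} (hij : i < j) (hj : j ≤ n) (k : ℤ) : c / n ≤ |(j - i) * α - k| := by
  have hji : (0 : ℝ) < (j - i : ℕ) := by simpa using hij
  calc c / n ≤ c / (j - i : ℕ) := by gcongr; lia
    _ ≤ |(j - i : ℕ) * α - k| := h _ (by lia) k
    _ = |(j - i) * α - k| := by rw [Nat.cast_sub hij.le]

lemma BadlyApproximableWith.div_le_fract_add_one_sub_fract (h : BadlyApproximableWith c α)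
    (hc : 0 < c) {n i j : ℕ} (hn : 1 ≤ n) (hi : i ≤ n) (hj : j ≤ n) (x : ℝ) :
    c / n ≤ Int.fract (i * α + x) + 1 - Int.fract (j * α + x) := by
  have hnR : (0 : ℝ) < n := mod_cast hn
  have hpos : 0 < Int.fract (i * α + x) + 1 - Int.fract (j * α + x) := by
    linarith [Int.fract_nonneg (i * α + x), Int.fract_lt_one (j * α + x)]
  rw [← abs_of_pos hpos]
  rcases lt_trichotomy i j with hij | rfl | hij
  · refine (h.div_le_abs_sub hc.le hij hj (⌊j * α + x⌋ - ⌊i * α + x⌋ + 1)).trans_eq ?_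
    rw [abs_sub_comm]
    push_cast [Int.fract]
    ring_nf
  · have hfract : c ≤ Int.fract α := by
      have hdist := h 1 le_rfl ⌊α⌋
      rwa [Nat.cast_one, div_one, one_mul, Int.self_sub_floor, Int.abs_fract] at hdist
    have hc1 : c ≤ 1 := hfract.trans (Int.fract_lt_one α).le
    simpa using div_le_one_of_le₀ (hc1.trans (mod_cast hn)) hnR.le
  · refine (h.div_le_abs_sub hc.le hij hi (⌊i * α + x⌋ - ⌊j * α + x⌋ - 1)).trans_eq ?_
    push_cast [Int.fract]
    ring_nf

lemma BadlyApproximableWith.exists_floor_eq_on_Ico (h : BadlyApproximableWith c α)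
    (hc : 0 < c) {n : ℕ} (hn : 1 ≤ n) (x : ℝ) :
    ∃ p, ∀ z ∈ Set.Ico p (p + c / n), ∀ i ≤ n, ⌊i * α + z⌋ = ⌊i * α + x⌋ := by
  have hne : (Finset.range (n + 1)).Nonempty := Finset.nonempty_range_add_one
  obtain ⟨i, hi, hmin⟩ := Finset.exists_min_image _ (fun i : ℕ => Int.fract (i * α + x)) hne
  obtain ⟨j, hj, hmax⟩ := Finset.exists_max_image _ (fun i : ℕ => Int.fract (i * α + x)) hne
  simp only [Finset.mem_range_succ_iff] at hi hj hmin hmax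
  have hlen := h.div_le_fract_add_one_sub_fract hc hn hi hj x
  refine ⟨x - Int.fract (i * α + x), fun z ⟨hz, hz'⟩ l hl => ?_⟩
  have hfloor := Int.floor_add_fract (l * α + x)
  rw [Int.floor_eq_iff]
  constructor <;> linarith [hmin l hl, hmax l hl]

end Rotation

section Sturmian

/-- The factor of length `n` of the two-sided sequence `v` that starts at position `k`. -/
def window {A : Type*} (v : ℤ → A) (k : ℤ) (n : ℕ) : List A :=
  (List.range n).map fun i : ℕ => v (k + i)

lemma length_window {A : Type*} (v : ℤ → A) (k : ℤ) (n : ℕ) : (window v k n).length = n := by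
  simp [window]

lemma window_add {A : Type*} (v : ℤ → A) (k : ℤ) (m n : ℕ) :
    window v k (m + n) = window v k m ++ window v (k + m) n := by
  simp [window, List.range_add, Function.comp_def, add_assoc]

lemma window_infix_window {A : Type*} (v : ℤ → A) (k : ℤ) {i m n : ℕ} (h : i + m ≤ n) :
    window v (k + i) m <:+: window v k n := by
  obtain ⟨r, rfl⟩ := Nat.exists_eq_add_of_le h
  exact ⟨window v k i, window v (k + (i + m : ℕ)) r, by simp only [window_add]⟩

lemma exists_eq_window_of_infix {A : Type*} {v : ℤ → A} {k : ℤ} {n : ℕ} {w : List A}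
    (h : w <:+: window v k n) : ∃ l, w = window v l w.length := by
  obtain ⟨a, b, hab⟩ := h
  have hn : a.length + w.length + b.length = n := by
    rw [← length_window v k n, ← hab, List.length_append, List.length_append]
  rw [← hn, window_add, window_add] at hab
  have haw := List.append_inj_left hab (by simp [length_window])
  exact ⟨k + a.length, List.append_inj_right haw (by simp [length_window])⟩

lemma mem_SubZ_iff {v : ℤ → ℝ} {w : List ℝ} :
    w ∈ SubZ v ↔ w ≠ [] ∧ ∃ k : ℤ, w = window v k w.length := by
  -- The map in `SubZ` is over `List ℤ`: the list of naturals is lifted there by a monadic coercion.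
  simp [SubZ, window, List.bind_eq_flatMap, ← List.map_eq_flatMap, Function.comp_def]

lemma factorClosed_SubZ (v : ℤ → ℝ) : FactorClosed (SubZ v) := by
  intro u hu w hw hwu
  obtain ⟨-, k, hk⟩ := mem_SubZ_iff.mp hu
  exact mem_SubZ_iff.mpr ⟨hw, exists_eq_window_of_infix (hk ▸ hwu)⟩

lemma factorClosed_Walpha (α : ℝ) : FactorClosed (Walpha α) := by
  rintro u ⟨θ, hθ, hu⟩ w hw hwu
  exact ⟨θ, hθ, factorClosed_SubZ _ hu hw hwu⟩

variable {α c : ℝ}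

lemma sturmian_eq_floor_sub_floor (hα : α ∈ Set.Icc 0 1) (θ : ℝ) (n : ℤ) :
    sturmian α θ n = ⌊(n + 1) * α + θ⌋ - ⌊n * α + θ⌋ := by
  obtain ⟨hα0, hα1⟩ := hα
  have hsum := Int.floor_add_fract (n * α + θ)
  have hlt := Int.fract_lt_one (n * α + θ)
  have hnonneg := Int.fract_nonneg (n * α + θ)
  rw [sturmian]
  split_ifs with h
  · have : ⌊(n + 1) * α + θ⌋ = ⌊n * α + θ⌋ + 1 := by
      rw [Int.floor_eq_iff]
      push_cast
      constructor <;> linarith [h.1]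
    simp [this]
  · have hlt' : Int.fract (n * α + θ) < 1 - α := by
      by_contra hge
      exact h ⟨not_lt.mp hge, hlt⟩
    have : ⌊(n + 1) * α + θ⌋ = ⌊n * α + θ⌋ := by
      rw [Int.floor_eq_iff]
      constructor <;> linarith
    simp [this]

lemma window_sturmian_eq_of_floor_eq (hα : α ∈ Set.Icc 0 1) {θ θ' : ℝ} {k l t : ℤ} {n : ℕ}
    (h : ∀ i ≤ n, ⌊i * α + (l * α + θ' - t)⌋ = ⌊i * α + (k * α + θ)⌋) :
    window (sturmian α θ') l n = window (sturmian α θ) k n := by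
  have hfloor : ∀ i ≤ n, ⌊(l + i) * α + θ'⌋ = ⌊(k + i) * α + θ⌋ + t := fun i hi => by
    rw [add_comm (k : ℝ), add_comm (l : ℝ), add_mul, add_assoc, add_mul, add_assoc, ← h i hi,
      ← add_sub_assoc, Int.floor_sub_intCast, sub_add_cancel]
  refine List.map_congr_left fun i hi => ?_
  have hi : i < n := List.mem_range.mp hi
  have hstart := hfloor i hi.le
  have hend := hfloor (i + 1) hi
  push_cast [← add_assoc] at hend
  simp only [sturmian_eq_floor_sub_floor hα]
  push_cast
  rw [hstart, hend]
  push_cast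
  ring

lemma BadlyApproximableWith.exists_linearlyRepetitive_Walpha (h : BadlyApproximableWith c α)
    (hc : 0 < c) (hα : α ∈ Set.Icc 0 1) : ∃ K, LinearlyRepetitive (Walpha α) K := by
  obtain ⟨K, hK⟩ := exists_nat_gt ((c⁻¹ + 2) / c)
  have hK0 : 0 < K := by
    have : (0 : ℝ) < K := lt_trans (by positivity) hK
    exact_mod_cast this
  refine ⟨K + 1, fun w hw u hu hlen => ?_⟩
  obtain ⟨θ, -, hw⟩ := hw
  obtain ⟨θ', -, hu⟩ := hu
  obtain ⟨hne, k, hwk⟩ := mem_SubZ_iff.mp hw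
  obtain ⟨-, l, hul⟩ := mem_SubZ_iff.mp hu
  have hn : 0 < w.length := List.length_pos_iff.mpr hne
  obtain ⟨p, hp⟩ := h.exists_floor_eq_on_Ico hc hn (k * α + θ)
  obtain ⟨i, hi, t, hlo, hhi⟩ :=
    h.exists_mul_add_sub_mem_Ico hc (Q := K * w.length) (by positivity) p (l * α + θ')
  have hshort : (c⁻¹ + 2) / (K * w.length : ℕ) ≤ c / w.length := by
    rw [Nat.cast_mul, ← div_div]
    gcongr
    exact (div_le_comm₀ hc (mod_cast hK0)).mp hK.le
  have hmem : (l + i : ℤ) * α + θ' - t ∈ Set.Ico p (p + c / w.length) := by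
    push_cast
    constructor <;> linarith
  rw [hul, hwk, ← window_sturmian_eq_of_floor_eq hα (hp _ hmem)]
  exact window_infix_window _ _ (by lia)

end Sturmian

theorem subadditive_limit_exists
    (α : ℝ) (hirr : Irrational α) (hα : α ∈ Set.Ioo (0 : ℝ) 1)
    (C : ℝ) (hC : ∀ n : ℕ, 1 ≤ n → (cfCoeff α n : ℝ) ≤ C)
    (F : List ℝ → ℝ)
    (hnonneg : ∀ w ∈ Walpha α, 0 ≤ F w)
    (hsub : ∀ a b : List ℝ, a ∈ Walpha α → b ∈ Walpha α → a ++ b ∈ Walpha α →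
      F (a ++ b) ≤ F a + F b) :
    ∃ L : ℝ, ∀ ε > (0 : ℝ), ∃ N : ℕ, ∀ w ∈ Walpha α, N ≤ w.length →
      |F w / w.length - L| ≤ ε := by
  have hbad := badlyApproximableWith_of_cfCoeff_le hirr hα hC
  have hC0 : 0 ≤ C := (Nat.cast_nonneg _).trans (hC 1 le_rfl)
  obtain ⟨K, hrep⟩ :=
    hbad.exists_linearlyRepetitive_Walpha (by positivity) (Set.Ioo_subset_Icc_self hα)
  exact hrep.exists_limit (factorClosed_Walpha α) hsub (c := 0) (by simpa using hnonneg)
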